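/- Let D be a nonempty closed convex subset of ℝ^d with nonempty interior, let g : ℝ^d → ℝ be continuous and m-strongly convex with m > 0, let σ > 0, and for n ≥ 1 let π^n be the probability measure with Lebesgue density exp(−(2/σ²)f_n)/Z^n, where f_n(x) = g(x) + (n/2)·dist(x,D)² and Z^n = ∫ exp(−(2/σ²)f_n) dx. Then for every ε > 0 there exists a constant C = C(ε, g, D, σ) < ∞, independent of n, such that π^n({x ∈ ℝ^d : dist(x,D) ≥ ε}) ≤ C·exp(−n·ε²/σ²) for all n ≥ 1. In particular, the mass assigned by π^n to the complement of any ε-neighborhood of D tends to 0 exponentially fast in n. -/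

import Mathlib

open MeasureTheory Metric

/-- A continuous strongly convex function on a proper inner product space grows at least
quadratically. -/
lemma StrongConvexOn.exists_quadratic_lower_bound {E : Type*} [NormedAddCommGroup E]
    [InnerProductSpace ℝ E] [ProperSpace E] {g : E → ℝ} {m : ℝ} (hm : 0 < m)
    (hgc : Continuous g) (hg : StrongConvexOn Set.univ m g) :
    ∃ K : ℝ, ∀ x, m / 4 * ‖x‖ ^ 2 - K ≤ g x := by
  obtain ⟨B, hB⟩ := (isCompact_closedBall (0 : E) 1).exists_bound_of_continuousOn
    hgc.continuousOn
  have hB0 : |g 0| ≤ B := hB 0 (by simp)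
  have hBnonneg : 0 ≤ B := (abs_nonneg _).trans hB0
  set L : ℝ := 2 * B + m / 2 with hL
  have hLpos : 0 < L := by positivity
  refine ⟨L ^ 2 / m + B + m / 4, fun x => ?_⟩
  have hsq : 0 ≤ L ^ 2 / m := by positivity
  rcases le_total ‖x‖ 1 with hx | hx
  · have hgx := (abs_le.1 (hB x (by simpa using hx))).1
    have hx2 : ‖x‖ ^ 2 ≤ 1 := pow_le_one₀ (norm_nonneg _) hx
    nlinarith
  · have hpos : 0 < ‖x‖ := by linarith
    have hinv : ‖x‖⁻¹ ≤ 1 := inv_le_one_of_one_le₀ hx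
    have hconv := hg.2 (Set.mem_univ x) (Set.mem_univ 0) (inv_nonneg.2 hpos.le)
      (sub_nonneg.2 hinv) (add_sub_cancel _ _)
    simp only [smul_zero, add_zero, sub_zero, smul_eq_mul] at hconv
    have hy := (abs_le.1 (hB (‖x‖⁻¹ • x) (by
      simp [norm_smul, inv_mul_cancel₀ hpos.ne']))).1
    have hscaled := mul_le_mul_of_nonneg_left (hy.trans hconv) hpos.le
    have hexpand : ‖x‖ * (‖x‖⁻¹ * g x + (1 - ‖x‖⁻¹) * g 0
        - ‖x‖⁻¹ * (1 - ‖x‖⁻¹) * (m / 2 * ‖x‖ ^ 2))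
        = g x + (‖x‖ - 1) * g 0 - m / 2 * ‖x‖ ^ 2 + m / 2 * ‖x‖ := by
      field_simp
      ring
    rw [hexpand] at hscaled
    have hg0 : (‖x‖ - 1) * g 0 ≤ (‖x‖ - 1) * B :=
      mul_le_mul_of_nonneg_left (abs_le.1 hB0).2 (by linarith)
    have hyoung : L * ‖x‖ ≤ m / 4 * ‖x‖ ^ 2 + L ^ 2 / m := by
      have hdiff : m / 4 * ‖x‖ ^ 2 + L ^ 2 / m - L * ‖x‖ = (m / 2 * ‖x‖ - L) ^ 2 / m := by
        field_simp
        ring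
      have : 0 ≤ (m / 2 * ‖x‖ - L) ^ 2 / m := by positivity
      linarith
    have hLx : L * ‖x‖ = 2 * B * ‖x‖ + m / 2 * ‖x‖ := by rw [hL]; ring
    nlinarith

/-- The Gibbs weight of a continuous strongly convex function is integrable. -/
lemma StrongConvexOn.integrable_exp_neg_mul {E : Type*} [NormedAddCommGroup E]
    [InnerProductSpace ℝ E] [FiniteDimensional ℝ E] [MeasurableSpace E] [BorelSpace E]
    {g : E → ℝ} {m c : ℝ} (hm : 0 < m) (hc : 0 < c)
    (hgc : Continuous g) (hg : StrongConvexOn Set.univ m g) :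
    Integrable (fun x => Real.exp (-c * g x)) := by
  have := FiniteDimensional.proper ℝ E
  obtain ⟨K, hK⟩ := hg.exists_quadratic_lower_bound hm hgc
  have hgauss := (GaussianFourier.integrable_cexp_neg_mul_sq_norm_add
    (V := E) (b := ((c * (m / 4) : ℝ) : ℂ)) (by
      rw [Complex.ofReal_re]; positivity) 0 0).norm
  refine (hgauss.const_mul (Real.exp (c * K))).mono'
    (by fun_prop) (Filter.Eventually.of_forall fun x => ?_)
  rw [Real.norm_eq_abs, Real.abs_exp, Complex.norm_exp, ← Real.exp_add, Real.exp_le_exp]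
  have hre : (-((c * (m / 4) : ℝ) : ℂ) * (‖x‖ : ℂ) ^ 2 + 0 * (inner ℝ (0 : E) x : ℂ)).re
      = -(c * (m / 4)) * ‖x‖ ^ 2 := by
    rw [zero_mul, add_zero]
    norm_cast
  rw [hre]
  nlinarith [mul_le_mul_of_nonneg_left (hK x) hc.le]

/-- Exponential concentration of the penalized Gibbs measures near `D`: for
every `ε > 0` there is a constant `C`, independent of `n`, such that
`π^n({dist(·,D) ≥ ε}) ≤ C·exp(−n ε²/σ²)` for all `n ≥ 1`. -/
theorem penalized_gibbs_concentration
    {d : ℕ} (D : Set (EuclideanSpace ℝ (Fin d)))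
    (hDne : D.Nonempty) (hDclosed : IsClosed D) (hDconv : Convex ℝ D)
    (hDint : (interior D).Nonempty)
    (g : EuclideanSpace ℝ (Fin d) → ℝ) (hgc : Continuous g)
    (m : ℝ) (hm : 0 < m) (hgsc : StrongConvexOn Set.univ m g)
    (σ : ℝ) (hσ : 0 < σ)
    (fn : ℕ → EuclideanSpace ℝ (Fin d) → ℝ)
    (hfn : ∀ n x, fn n x = g x + (n : ℝ) / 2 * (infDist x D) ^ 2)
    (Z : ℕ → ℝ)
    (hZ : ∀ n, Z n = ∫ x : EuclideanSpace ℝ (Fin d), Real.exp (-(2 / σ ^ 2) * fn n x))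
    (π : ℕ → Measure (EuclideanSpace ℝ (Fin d)))
    (hπ : ∀ n, π n = volume.withDensity
      (fun x => ENNReal.ofReal (Real.exp (-(2 / σ ^ 2) * fn n x) / Z n))) :
    ∀ ε : ℝ, 0 < ε → ∃ C : ℝ, ∀ n : ℕ, 1 ≤ n →
      π n {x | ε ≤ infDist x D} ≤
        ENNReal.ofReal (C * Real.exp (-(n : ℝ) * ε ^ 2 / σ ^ 2)) := by
  intro ε hε
  set c : ℝ := 2 / σ ^ 2 with hc
  have hcpos : 0 < c := by positivity
  have hint : Integrable (fun x => Real.exp (-c * g x)) :=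
    hgsc.integrable_exp_neg_mul hm hcpos hgc
  set I : ℝ := ∫ x in D, Real.exp (-c * g x) with hI
  have hDmeas : MeasurableSet D := hDclosed.measurableSet
  have hDvol : volume D ≠ 0 :=
    (Measure.measure_pos_of_nonempty_interior volume hDint).ne'
  have hIpos : 0 < I := by
    have : NeZero (volume.restrict D) := ⟨by simpa using hDvol⟩
    exact integral_exp_pos hint.integrableOn
  have hZI : ∀ n, I ≤ Z n := by
    intro n
    have hintn : Integrable (fun x => Real.exp (-c * fn n x)) := by
      refine hint.mono' ?_ (Filter.Eventually.of_forall fun x => ?_)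
      · simp only [hfn]
        have := continuous_infDist_pt D
        fun_prop
      · rw [Real.norm_eq_abs, Real.abs_exp, Real.exp_le_exp, hfn]
        have : 0 ≤ (n : ℝ) / 2 * infDist x D ^ 2 := by positivity
        nlinarith
    have heq : I = ∫ x in D, Real.exp (-c * fn n x) :=
      setIntegral_congr_fun hDmeas fun x hx => by simp [hfn, infDist_zero_of_mem hx]
    rw [heq, hZ]
    exact setIntegral_le_integral hintn
      (Filter.Eventually.of_forall fun x => (Real.exp_pos _).le)
  refine ⟨(∫ x, Real.exp (-c * g x)) / I, fun n _ => ?_⟩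
  set r : ℝ := Real.exp (-(n : ℝ) * ε ^ 2 / σ ^ 2) with hr
  have hmeas : MeasurableSet {x : EuclideanSpace ℝ (Fin d) | ε ≤ infDist x D} :=
    (isClosed_le continuous_const (continuous_infDist_pt D)).measurableSet
  have hbound : ∀ x ∈ {x : EuclideanSpace ℝ (Fin d) | ε ≤ infDist x D},
      ENNReal.ofReal (Real.exp (-c * fn n x) / Z n)
        ≤ ENNReal.ofReal (Real.exp (-c * g x) * (r / I)) := by
    intro x hx
    apply ENNReal.ofReal_le_ofReal
    rw [← mul_div_assoc]
    refine div_le_div₀ (by positivity) ?_ hIpos (hZI n)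
    rw [hr, ← Real.exp_add, Real.exp_le_exp, hfn]
    have hsq : ε ^ 2 ≤ infDist x D ^ 2 := pow_le_pow_left₀ hε.le hx 2
    have hpen : -(n : ℝ) * ε ^ 2 / σ ^ 2 = -(c * ((n : ℝ) / 2 * ε ^ 2)) := by
      rw [hc]; ring
    have : c * ((n : ℝ) / 2 * ε ^ 2) ≤ c * ((n : ℝ) / 2 * infDist x D ^ 2) := by gcongr
    rw [hpen]
    linarith
  calc π n {x | ε ≤ infDist x D}
      = ∫⁻ x in {x | ε ≤ infDist x D}, ENNReal.ofReal (Real.exp (-c * fn n x) / Z n) := by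
        rw [hπ, withDensity_apply _ hmeas]
    _ ≤ ∫⁻ x in {x | ε ≤ infDist x D}, ENNReal.ofReal (Real.exp (-c * g x) * (r / I)) :=
        setLIntegral_mono' hmeas hbound
    _ ≤ ∫⁻ x, ENNReal.ofReal (Real.exp (-c * g x) * (r / I)) := setLIntegral_le_lintegral _ _
    _ = ENNReal.ofReal (∫ x, Real.exp (-c * g x) * (r / I)) :=
        (ofReal_integral_eq_lintegral_ofReal (hint.mul_const _)
          (Filter.Eventually.of_forall fun x => by positivity)).symm
    _ = ENNReal.ofReal ((∫ x, Real.exp (-c * g x)) / I * r) := by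
        rw [integral_mul_const]
        congr 1
        ring
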